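/- Suppose the penalty price satisfies π^p ≥ π^e, the reward price satisfies π^r ≥ 0, and the selection probability satisfies π^e/(π^r + π^e) < α ≤ 1. Then the agent's expected first-stage cost J(f) = α·(inf over q ∈ [0,∞) of J_s(q, f)) + (1 − α)·(inf over q ∈ [0,∞) of J_ns(q, f)) is nonincreasing in f on [0, ∞) and strictly decreasing in f on [b, ∞); consequently, if reports are constrained to f ∈ [0, b_max] with b_max ≥ b, then the maximal report f = b_max minimizes J over [0, b_max]. -/

import Mathlib

/-!
Both second-stage problems are piecewise linear in `q`, so their values are attained at kinks.
The not-selected agent consumes `max b f`, at cost `πᵉ · max b f − π · b`. The selected agent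
consumes either `0` or `b`, since the kink of `J_s` at `q = f` is concave. Up to `f = b`
the not-selected value is constant and the selected value is nonincreasing. Beyond `b`, the
selected value has slope `-πʳ` and the not-selected value slope `πᵉ`, so `J` has slope
`-α πʳ + (1 - α) πᵉ`, which is negative exactly when `πᵉ < α (πʳ + πᵉ)`.
-/

/-- The agent's (discretionary) utility function: `u(q) = π·q` for `q < b` and `π·b` for `q ≥ b`. -/
noncomputable def agentUtility (b π q : ℝ) : ℝ := if q < b then π * q else π * b

/-- The selected second-stage cost: `J_s(q,f) = πᵉ·q − u(q) − πʳ·(f − q)⁺`. -/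
noncomputable def Jsel (b π πe πr f q : ℝ) : ℝ :=
  πe * q - agentUtility b π q - πr * max (f - q) 0

/-- The not-selected second-stage cost: `J_ns(q,f) = πᵉ·q − u(q) + πᵖ·(f − q)⁺`. -/
noncomputable def Jns (b π πe πp f q : ℝ) : ℝ :=
  πe * q - agentUtility b π q + πp * max (f - q) 0

/-- The expected first-stage cost of reporting baseline `f`:
`J(f) = α·(inf_{q ≥ 0} J_s(q,f)) + (1 − α)·(inf_{q ≥ 0} J_ns(q,f))`. -/
noncomputable def Jexp (b π πe πp πr α f : ℝ) : ℝ :=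
  α * sInf ((fun q => Jsel b π πe πr f q) '' Set.Ici 0) +
  (1 - α) * sInf ((fun q => Jns b π πe πp f q) '' Set.Ici 0)

/-- The optimal not-selected consumption is `q = max b f`. -/
lemma sInf_Jns (b π πe πp f : ℝ) (hb : 0 < b) (hπ : πe < π) (hπe : 0 < πe)
    (hπp : πe ≤ πp) :
    sInf ((fun q => Jns b π πe πp f q) '' Set.Ici 0) = πe * max b f - π * b := by
  refine IsLeast.csInf_eq ⟨⟨max b f, le_max_of_le_left hb.le, ?_⟩, ?_⟩
  · simp [Jns, agentUtility]
  · rintro _ ⟨q, hq, rfl⟩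
    simp only [Jns, agentUtility]
    have h1 : πe * max (f - q) 0 ≤ πp * max (f - q) 0 :=
      mul_le_mul_of_nonneg_right hπp (le_max_right _ _)
    -- Topping up from `max q b` to `f` costs at most `πᵉ` times the shortfall `(f - q)⁺`.
    have h2 : max b f ≤ max q b + max (f - q) 0 := by
      grind
    have h3 := mul_le_mul_of_nonneg_left h2 hπe.le
    split_ifs with hqb
    · rw [max_eq_right hqb.le] at h3
      nlinarith
    · rw [max_eq_left (not_lt.mp hqb)] at h3
      nlinarith

/-- The optimal selected consumption is either `q = 0` or `q = b`. -/
lemma sInf_Jsel (b π πe πr f : ℝ) (hb : 0 < b) (hπ : πe < π) (hπe : 0 < πe)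
    (hπr : 0 ≤ πr) (hf : 0 ≤ f) :
    sInf ((fun q => Jsel b π πe πr f q) '' Set.Ici 0) =
      min (-(πr * f)) ((πe - π) * b - πr * max (f - b) 0) := by
  refine IsLeast.csInf_eq ⟨?_, ?_⟩
  · rcases min_choice (-(πr * f)) ((πe - π) * b - πr * max (f - b) 0) with h | h <;> rw [h]
    · exact ⟨0, Set.self_mem_Ici, by simp [Jsel, agentUtility, hb, hf]⟩
    · exact ⟨b, hb.le, by simp [Jsel, agentUtility]; ring⟩
  · rintro _ ⟨q, hq, rfl⟩
    have hq0 : 0 ≤ q := hq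
    simp only [Jsel, agentUtility]
    split_ifs with hqb
    · rcases le_total f q with hfq | hfq
      · apply min_le_of_right_le
        rw [max_eq_right (by linarith : f - q ≤ 0), max_eq_right (by linarith : f - b ≤ 0)]
        nlinarith
      · rw [max_eq_left (by linarith : 0 ≤ f - q)]
        -- On `[0, min b f]` the cost has slope `πᵉ - π + πʳ`, whose sign selects the endpoint.
        rcases le_total 0 (πe - π + πr) with hs | hs
        · apply min_le_of_left_le
          nlinarith [mul_nonneg hs hq0]
        · apply min_le_of_right_le
          rcases le_total f b with hfb | hfb
          · rw [max_eq_right (by linarith : f - b ≤ 0)]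
            nlinarith [mul_le_mul_of_nonpos_left hfq hs]
          · rw [max_eq_left (by linarith : 0 ≤ f - b)]
            nlinarith [mul_le_mul_of_nonpos_left hqb.le hs]
    · apply min_le_of_right_le
      have hbq := not_lt.mp hqb
      have h1 : max (f - q) 0 ≤ max (f - b) 0 := max_le_max (by linarith) le_rfl
      nlinarith [mul_le_mul_of_nonneg_left h1 hπr]

/-- If the penalty price satisfies `πᵖ ≥ πᵉ`, the reward price satisfies `πʳ ≥ 0`, and the
selection probability satisfies `πᵉ/(πʳ + πᵉ) < α ≤ 1`, then the agent's expected first-stage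
cost `J` is nonincreasing on `[0, ∞)` and strictly decreasing on `[b, ∞)`; consequently, if
reports are constrained to `[0, b_max]` with `b_max ≥ b`, the maximal report `f = b_max`
minimizes `J` over `[0, b_max]`. -/
theorem stmt7 (b π πe πp πr α : ℝ) (hb : 0 < b) (hπ : πe < π) (hπe : 0 < πe)
    (hπp : πe ≤ πp) (hπr : 0 ≤ πr) (hα : πe / (πr + πe) < α) (hα1 : α ≤ 1) :
    (∀ f₁ f₂ : ℝ, 0 ≤ f₁ → f₁ ≤ f₂ →
        Jexp b π πe πp πr α f₂ ≤ Jexp b π πe πp πr α f₁) ∧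
    (∀ f₁ f₂ : ℝ, b ≤ f₁ → f₁ < f₂ →
        Jexp b π πe πp πr α f₂ < Jexp b π πe πp πr α f₁) ∧
    (∀ bmax : ℝ, b ≤ bmax → ∀ f : ℝ, 0 ≤ f → f ≤ bmax →
        Jexp b π πe πp πr α bmax ≤ Jexp b π πe πp πr α f) := by
  have hα0 : 0 < α := lt_of_le_of_lt (by positivity) hα
  have hkey : πe < α * (πr + πe) := (div_lt_iff₀ (by positivity)).mp hα
  have hstrict : ∀ f₁ f₂ : ℝ, b ≤ f₁ → f₁ < f₂ →
      Jexp b π πe πp πr α f₂ < Jexp b π πe πp πr α f₁ := by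
    intro f₁ f₂ h1 h12
    have key : ∀ f, b ≤ f → Jexp b π πe πp πr α f =
        α * (min 0 ((πe - π + πr) * b) - πr * f) + (1 - α) * (πe * f - π * b) := by
      intro f hf
      rw [Jexp, sInf_Jns b π πe πp f hb hπ hπe hπp,
        sInf_Jsel b π πe πr f hb hπ hπe hπr (by linarith), max_eq_right hf,
        max_eq_left (by linarith : 0 ≤ f - b), ← min_sub_sub_right]
      ring_nf
    rw [key f₁ h1, key f₂ (by linarith)]
    nlinarith [mul_pos (sub_pos.mpr hkey) (sub_pos.mpr h12)]
  have hlow : ∀ f₁ f₂ : ℝ, 0 ≤ f₁ → f₁ ≤ f₂ → f₂ ≤ b →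
      Jexp b π πe πp πr α f₂ ≤ Jexp b π πe πp πr α f₁ := by
    intro f₁ f₂ h1 h12 h2
    rw [Jexp, Jexp, sInf_Jns b π πe πp f₁ hb hπ hπe hπp, sInf_Jns b π πe πp f₂ hb hπ hπe hπp,
      sInf_Jsel b π πe πr f₁ hb hπ hπe hπr h1,
      sInf_Jsel b π πe πr f₂ hb hπ hπe hπr (by linarith), max_eq_left h2,
      max_eq_left (h12.trans h2)]
    gcongr
  have hmono : ∀ f₁ f₂ : ℝ, 0 ≤ f₁ → f₁ ≤ f₂ →
      Jexp b π πe πp πr α f₂ ≤ Jexp b π πe πp πr α f₁ := by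
    intro f₁ f₂ h1 h12
    have hhigh : ∀ g₁ g₂ : ℝ, b ≤ g₁ → g₁ ≤ g₂ →
        Jexp b π πe πp πr α g₂ ≤ Jexp b π πe πp πr α g₁ := by
      intro g₁ g₂ hg h
      rcases h.eq_or_lt with rfl | h
      · exact le_rfl
      · exact (hstrict g₁ g₂ hg h).le
    rcases le_total f₂ b with h2 | h2
    · exact hlow f₁ f₂ h1 h12 h2
    · rcases le_total b f₁ with h3 | h3
      · exact hhigh f₁ f₂ h3 h12
      · exact (hhigh b f₂ le_rfl h2).trans (hlow f₁ b h1 h3 le_rfl)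
  exact ⟨hmono, hstrict, fun bmax _ f hf hfm => hmono f bmax hf hfm⟩
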